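/- arXiv:1805.04568 — 2 statements merged into one kernel-verified Lean document; each statement's English description precedes it below -/
import Mathlib

section
/- Let R = C[[x,y]]/(xy(x-y)), M = R/(x), and N = R/(y). Then Tor_2^R(M, N) \cong C (the residue field) and Tor_1^R(M, N) = 0. -/
open CategoryTheory MvPowerSeries

noncomputable section

/-- The ring `R = ℂ[[x,y]]/(xy(x-y))`. -/
abbrev R9 : Type :=
  MvPowerSeries (Fin 2) ℂ ⧸
    Ideal.span {(X 0 : MvPowerSeries (Fin 2) ℂ) * X 1 * (X 0 - X 1)}

def x9 : R9 := Ideal.Quotient.mk _ (X 0)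
def y9 : R9 := Ideal.Quotient.mk _ (X 1)

/-- `M = R/(x)` -/
abbrev M9 : Type := R9 ⧸ Ideal.span {x9}
/-- `N = R/(y)` -/
abbrev N9 : Type := R9 ⧸ Ideal.span {y9}

/-!
In `R = ℂ⟦x, y⟧ / (xy(x - y))` the elements `y` and `x(x - y)` generate each other's annihilators,
so multiplication by them alternately gives a 2-periodic free resolution of `R / (y)`. We resolve
`R / (y)` rather than `R / (x)` because `Tor` is derived in its second argument. After tensoring
with `R / (x)`, multiplication by `x(x - y)` becomes zero and multiplication by `y` becomes
injective, hence the odd `Tor` modules vanish and the positive even ones are the cokernel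
`R / (x, y)` of multiplication by `y`. The annihilators are as claimed because `x`, `y` and `x - y`
are nonzerodivisors in `ℂ⟦x, y⟧`, and multiplication by `y` on `R / (x) = ℂ⟦x, y⟧ / (x)` is
injective because `x` divides a power series exactly when its coefficients without `x` vanish.
-/

open Limits MonoidalCategory
open scoped Pointwise nonZeroDivisors

universe u v

section PeriodicComplex

variable {A : Type*} [CommRing A] {a b : A}
  {C : Type*} [Category* C] [Preadditive C] [Linear A C]

lemma smul_id_comp_smul_id (X : C) (h : a * b = 0) : (a • 𝟙 X) ≫ (b • 𝟙 X) = 0 := by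
  rw [Linear.smul_comp, Category.id_comp, smul_smul, h, zero_smul]

/-- The chain complex `⋯ ⟶ X --a--> X --b--> X --a--> X`, with multiplication by `a` in odd
degrees and by `b` in positive even degrees. -/
def periodicComplex (X : C) (h : a * b = 0) : ChainComplex C ℕ :=
  HomologicalComplex.alternatingConst X
    (smul_id_comp_smul_id X (mul_comm a b ▸ h)) (smul_id_comp_smul_id X h)
    fun _ _ ↦ ComplexShape.down_nat_odd_add

lemma periodicComplex_d (X : C) (h : a * b = 0) (n : ℕ) :
    (periodicComplex X h).d (n + 1) n = (if Even n then a else b) • 𝟙 X := by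
  by_cases hn : Even n <;> simp [periodicComplex, hn, Nat.even_add_one] <;> rfl

variable {D : Type*} [Category* D] [Preadditive D] [Linear A D]

/-- A linear functor carries the periodic complex of `X` to that of any object isomorphic to
`F.obj X`. -/
def mapPeriodicComplexIso (F : C ⥤ D) [F.Additive] [F.Linear A] {X : C} {Y : D}
    (e : F.obj X ≅ Y) (h : a * b = 0) :
    (F.mapHomologicalComplex _).obj (periodicComplex X h) ≅ periodicComplex Y h :=
  HomologicalComplex.Hom.isoOfComponents (fun _ ↦ e) <| by
    have comm (c : A) : e.hom ≫ (c • 𝟙 Y) = F.map (c • 𝟙 X) ≫ e.hom := by simp [F.map_smul]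
    rintro _ i rfl
    change e.hom ≫ (periodicComplex Y h).d (i + 1) i =
      F.map ((periodicComplex X h).d (i + 1) i) ≫ e.hom
    rw [periodicComplex_d, periodicComplex_d]
    exact comm _

end PeriodicComplex

section Augmentation

variable {A : Type u} [CommRing A] {a b : A}

lemma smul_id_comp_mkQ (a : A) :
    (a • 𝟙 (ModuleCat.of A A)) ≫ ModuleCat.ofHom (Ideal.span {a}).mkQ = 0 := by
  ext
  exact (Submodule.Quotient.mk_eq_zero _).2
    (Ideal.mul_mem_right _ _ (Ideal.mem_span_singleton_self a))

lemma exact_smul_id_mkQ (a : A) : (ShortComplex.mk _ _ (smul_id_comp_mkQ a)).Exact := by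
  rw [ShortComplex.moduleCat_exact_iff]
  intro r hr
  obtain ⟨s, hs⟩ := Ideal.mem_span_singleton.1 ((Submodule.Quotient.mk_eq_zero _).1 hr)
  exact ⟨s, hs.symm⟩

/-- The augmentation of the periodic complex of `A` by the projection `A ⟶ A / (a)`. -/
def periodicComplexAugmentation (h : a * b = 0) :
    periodicComplex (ModuleCat.of A A) h ⟶
      (ChainComplex.single₀ (ModuleCat.{u} A)).obj (ModuleCat.of A (A ⧸ Ideal.span {a})) :=
  (ChainComplex.toSingle₀Equiv _ _).symm ⟨ModuleCat.ofHom (Ideal.span {a}).mkQ, by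
    rw [periodicComplex_d, if_pos Even.zero]; exact smul_id_comp_mkQ a⟩

lemma periodicComplexAugmentation_f_zero (h : a * b = 0) :
    (periodicComplexAugmentation h).f 0 = ModuleCat.ofHom (Ideal.span {a}).mkQ :=
  ChainComplex.toSingle₀Equiv_symm_apply_f_zero _ _

end Augmentation

/-- An exact pair of zero divisors: each of `a` and `b` generates the annihilator of the other.
The degenerate pairs `(0, 1)` and `(1, 0)` are allowed. -/
structure IsExactPair {A : Type*} [CommRing A] (a b : A) : Prop where
  left_mul_eq_zero_iff : ∀ r, a * r = 0 ↔ b ∣ r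
  right_mul_eq_zero_iff : ∀ r, b * r = 0 ↔ a ∣ r

namespace IsExactPair

variable {A : Type u} [CommRing A] {a b : A}

lemma symm (h : IsExactPair a b) : IsExactPair b a :=
  ⟨h.right_mul_eq_zero_iff, h.left_mul_eq_zero_iff⟩

lemma mul_eq_zero (h : IsExactPair a b) : a * b = 0 :=
  (h.left_mul_eq_zero_iff b).2 dvd_rfl

lemma exact_smul_id (h : IsExactPair a b) :
    (ShortComplex.mk (a • 𝟙 (ModuleCat.of A A)) (b • 𝟙 (ModuleCat.of A A))
      (smul_id_comp_smul_id _ h.mul_eq_zero)).Exact := by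
  rw [ShortComplex.moduleCat_exact_iff]
  intro r hr
  obtain ⟨s, hs⟩ := (h.right_mul_eq_zero_iff r).1 hr
  exact ⟨s, hs.symm⟩

lemma exactAt_periodicComplex (h : IsExactPair a b) (n : ℕ) :
    (periodicComplex (ModuleCat.of A A) h.mul_eq_zero).ExactAt (n + 1) := by
  rw [HomologicalComplex.exactAt_iff' _ (n + 2) (n + 1) n (by simp) (by simp)]
  rcases Nat.even_or_odd (n + 1) with hn | hn
  · exact ShortComplex.exact_of_iso
      (HomologicalComplex.alternatingConstScIsoEven _ _ _ _ (by simp) (by simp) hn).symm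
      h.exact_smul_id
  · exact ShortComplex.exact_of_iso
      (HomologicalComplex.alternatingConstScIsoOdd _ _ _ _ (by simp) (by simp) hn).symm
      h.symm.exact_smul_id

lemma quasiIso_augmentation (h : IsExactPair a b) :
    QuasiIso (periodicComplexAugmentation h.mul_eq_zero) where
  quasiIsoAt
    | 0 => by
      rw [ChainComplex.quasiIsoAt₀_iff, ShortComplex.quasiIso_iff_of_zeros' _ rfl rfl rfl]
      constructor
      · simpa only [periodicComplex_d, if_pos Even.zero, periodicComplexAugmentation_f_zero] using!
          exact_smul_id_mkQ a
      · simpa only [periodicComplexAugmentation_f_zero] using!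
          (ModuleCat.epi_iff_surjective _).2 (Submodule.mkQ_surjective _)
    | n + 1 => by
      rw [quasiIsoAt_iff_exactAt' (hL := ChainComplex.exactAt_succ_single_obj ..)]
      exact h.exactAt_periodicComplex n

/-- If `a` and `b` generate each other's annihilators, then
`⋯ ⟶ A --a--> A --b--> A --a--> A` is a free resolution of `A / (a)`. -/
def resolution (h : IsExactPair a b) :
    ProjectiveResolution (ModuleCat.of A (A ⧸ Ideal.span {a})) where
  complex := periodicComplex (ModuleCat.of A A) h.mul_eq_zero
  projective _ := inferInstanceAs <| Projective (ModuleCat.of A A)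
  π := periodicComplexAugmentation h.mul_eq_zero
  quasiIso := h.quasiIso_augmentation

/-- `Tor_n(M, A / (a))` is the homology of `⋯ ⟶ M --a--> M --b--> M --a--> M`. -/
def torIso (h : IsExactPair a b) (M : ModuleCat.{u} A) (n : ℕ) :
    ((Tor (ModuleCat.{u} A) n).obj M).obj (ModuleCat.of A (A ⧸ Ideal.span {a})) ≅
      (periodicComplex M h.mul_eq_zero).homology n :=
  h.resolution.isoLeftDerivedObj ((tensoringLeft _).obj M) n ≪≫
    (HomologicalComplex.homologyFunctor _ _ n).mapIso
      (mapPeriodicComplexIso ((tensoringLeft _).obj M) (ρ_ M) h.mul_eq_zero)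

lemma subsingleton_tor_odd (h : IsExactPair a b) {M : ModuleCat.{u} A}
    (hM : IsSMulRegular M a) (n : ℕ) :
    Subsingleton (((Tor (ModuleCat.{u} A) (2 * n + 1)).obj M).obj
      (ModuleCat.of A (A ⧸ Ideal.span {a}))) := by
  rw [← ModuleCat.isZero_iff_subsingleton]
  refine IsZero.of_iso ?_ (h.torIso M _ ≪≫ HomologicalComplex.alternatingConstHomologyIsoOdd
    _ _ _ _ (by simp) (by simp) (odd_two_mul_add_one n))
  rw [← ShortComplex.exact_iff_isZero_homology, ShortComplex.moduleCat_exact_iff]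
  intro m hm
  exact ⟨0, (map_zero _).trans (hM.right_eq_zero_of_smul hm).symm⟩

/-- `Tor_{2n+2}(M, A / (a))` is `M / aM` when `b` kills `M`. -/
def torEvenIso (h : IsExactPair a b) {M : ModuleCat.{u} A}
    (hM : b ∈ Module.annihilator A M) (n : ℕ) :
    ((Tor (ModuleCat.{u} A) (2 * n + 2)).obj M).obj (ModuleCat.of A (A ⧸ Ideal.span {a})) ≅
      ModuleCat.of A (QuotSMulTop a M) :=
  let S := ShortComplex.mk (a • 𝟙 M) (b • 𝟙 M) (smul_id_comp_smul_id M h.mul_eq_zero)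
  have : IsIso S.homologyι := S.isIso_homologyι <| by
    ext m
    exact Module.mem_annihilator.1 hM m
  have range_eq : LinearMap.range S.f.hom = a • ⊤ := LinearMap.range_eq_map _
  h.torIso M _ ≪≫ HomologicalComplex.alternatingConstHomologyIsoEven
    _ _ _ _ (by simp) (by simp) (by simp [Nat.even_add]) ≪≫ asIso S.homologyι ≪≫
    S.moduleCatOpcyclesIso ≪≫ (Submodule.quotEquivOfEq _ _ range_eq).toModuleIso

end IsExactPair

/-- The identification `(A / I) / a (A / I) ≃ A / (I + (a))`. -/
def quotSMulTopQuotientEquiv {A : Type*} [CommRing A] (I : Ideal A) (a : A) :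
    QuotSMulTop a (A ⧸ I) ≃ₗ[A] A ⧸ (I ⊔ Ideal.span {a}) :=
  have map_eq : Submodule.map I.mkQ (Ideal.span {a}) = a • ⊤ := by
    rw [← Ideal.mul_top (Ideal.span {a}), ← smul_eq_mul, Submodule.ideal_span_singleton_smul,
      Submodule.map_pointwise_smul, Submodule.map_top, Submodule.range_mkQ]
  (Submodule.quotEquivOfEq _ _ map_eq.symm).trans
    (Submodule.quotientQuotientEquivQuotientSup I (Ideal.span {a}))

lemma isSMulRegular_quotient_span_singleton_iff {A : Type*} [CommRing A] {a c : A} :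
    IsSMulRegular (A ⧸ Ideal.span {c}) a ↔ ∀ r, c ∣ a * r → c ∣ r := by
  simp only [isSMulRegular_quotient_iff_mem_of_smul_mem, Ideal.mem_span_singleton, smul_eq_mul]

section PrincipalQuotient

variable {P R : Type*} [CommRing P] [CommRing R] {π : P →+* R} {p : P}

lemma map_dvd_map_iff_of_ker_eq_span (hπ : Function.Surjective π)
    (hker : RingHom.ker π = Ideal.span {p}) {f : P} (hf : f ∣ p) (r : P) :
    π f ∣ π r ↔ f ∣ r := by
  refine ⟨fun h ↦ ?_, map_dvd π⟩
  obtain ⟨s, hs⟩ := h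
  obtain ⟨s, rfl⟩ := hπ s
  have : p ∣ r - f * s := by
    rw [← Ideal.mem_span_singleton, ← hker, RingHom.mem_ker, map_sub, map_mul, hs, sub_self]
  exact (dvd_sub_left (dvd_mul_right f s)).1 (hf.trans this)

lemma isExactPair_of_ker_eq_span_mul {f g : P} (hf : f ∈ P⁰) (hg : g ∈ P⁰)
    (hπ : Function.Surjective π) (hker : RingHom.ker π = Ideal.span {f * g}) :
    IsExactPair (π f) (π g) := by
  have map_eq_zero_iff (r : P) : π r = 0 ↔ f * g ∣ r := by
    rw [← RingHom.mem_ker, hker, Ideal.mem_span_singleton]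
  constructor <;> refine hπ.forall.2 fun r ↦ ?_
  · rw [← map_mul, map_eq_zero_iff, dvd_cancel_left_mem_nonZeroDivisors hf,
      map_dvd_map_iff_of_ker_eq_span hπ hker (dvd_mul_left g f)]
  · rw [← map_mul, map_eq_zero_iff, mul_comm f, dvd_cancel_left_mem_nonZeroDivisors hg,
      map_dvd_map_iff_of_ker_eq_span hπ hker (dvd_mul_right f g)]

lemma isSMulRegular_quotient_span_map (hπ : Function.Surjective π)
    (hker : RingHom.ker π = Ideal.span {p}) {x y : P} (hx : x ∣ p)
    (h : IsSMulRegular (P ⧸ Ideal.span {x}) y) :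
    IsSMulRegular (R ⧸ Ideal.span {π x}) (π y) := by
  rw [isSMulRegular_quotient_span_singleton_iff] at h ⊢
  refine hπ.forall.2 fun r hr ↦ ?_
  rw [← map_mul, map_dvd_map_iff_of_ker_eq_span hπ hker hx] at hr
  exact map_dvd π (h r hr)

end PrincipalQuotient

lemma isSMulRegular_quotient_span_X {σ k : Type*} [CommRing k] {i j : σ} (hij : i ≠ j) :
    IsSMulRegular (MvPowerSeries σ k ⧸ Ideal.span {(X i : MvPowerSeries σ k)})
      (X j : MvPowerSeries σ k) := by
  rw [isSMulRegular_quotient_span_singleton_iff]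
  intro r hr
  rw [X_dvd_iff] at hr ⊢
  intro m hm
  have := hr (Finsupp.single j 1 + m) (by simp [hm, hij])
  rwa [X_def, coeff_add_monomial_mul, one_mul] at this

lemma X_sub_X_mem_nonZeroDivisors {σ k : Type*} [CommRing k] [IsDomain k] {i j : σ}
    (hij : i ≠ j) : (X i - X j : MvPowerSeries σ k) ∈ (MvPowerSeries σ k)⁰ :=
  mem_nonZeroDivisors_of_ne_zero (sub_ne_zero.2 (X_inj.not.2 hij))

theorem stmt_9_general {P : Type v} {R : Type u} [CommRing P] [CommRing R] {x y z : P}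
    (hx : x ∈ P⁰) (hy : y ∈ P⁰) (hz : z ∈ P⁰) (hxy : IsSMulRegular (P ⧸ Ideal.span {x}) y)
    {π : P →+* R} (hπ : Function.Surjective π)
    (hker : RingHom.ker π = Ideal.span {x * y * z}) (n : ℕ) :
    Nonempty (((Tor (ModuleCat.{u} R) (2 * n + 2)).obj
        (ModuleCat.of R (R ⧸ Ideal.span {π x}))).obj (ModuleCat.of R (R ⧸ Ideal.span {π y})) ≅
          ModuleCat.of R (R ⧸ Ideal.span {π x, π y})) ∧
      Subsingleton (((Tor (ModuleCat.{u} R) (2 * n + 1)).obj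
        (ModuleCat.of R (R ⧸ Ideal.span {π x}))).obj
          (ModuleCat.of R (R ⧸ Ideal.span {π y}))) := by
  have pair : IsExactPair (π y) (π (x * z)) :=
    isExactPair_of_ker_eq_span_mul hy (mul_mem hx hz) hπ
      (by rw [hker, mul_left_comm, mul_assoc])
  have annihilates : π (x * z) ∈ Module.annihilator R (R ⧸ Ideal.span {π x}) := by
    rw [Ideal.annihilator_quotient, Ideal.mem_span_singleton, map_mul]
    exact dvd_mul_right _ _
  have regular : IsSMulRegular (R ⧸ Ideal.span {π x}) (π y) :=
    isSMulRegular_quotient_span_map hπ hker ((dvd_mul_right x y).mul_right z) hxy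
  rw [Ideal.span_insert]
  exact ⟨⟨pair.torEvenIso annihilates n ≪≫ (quotSMulTopQuotientEquiv _ _).toModuleIso⟩,
    pair.subsingleton_tor_odd regular n⟩

/-- For `R = ℂ[[x,y]]/(xy(x-y))`, `M = R/(x)` and `N = R/(y)` one has
`Tor₂^R(M,N) ≅ ℂ` (the residue field, i.e. `R/(x,y)` as an `R`-module) and
`Tor₁^R(M,N) = 0`. -/
theorem stmt_9 :
    Nonempty ((((Tor (ModuleCat.{0} R9) 2).obj (ModuleCat.of R9 M9)).obj
        (ModuleCat.of R9 N9)) ≅ ModuleCat.of R9 (R9 ⧸ Ideal.span {x9, y9})) ∧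
    Subsingleton (((Tor (ModuleCat.{0} R9) 1).obj (ModuleCat.of R9 M9)).obj
        (ModuleCat.of R9 N9)) :=
  stmt_9_general (P := MvPowerSeries (Fin 2) ℂ) (R := R9) (x := X 0) (y := X 1)
    X_mem_nonzeroDivisors X_mem_nonzeroDivisors (X_sub_X_mem_nonZeroDivisors zero_ne_one)
    (isSMulRegular_quotient_span_X zero_ne_one) Ideal.Quotient.mk_surjective Ideal.mk_ker 0
end
end

section
/- Let R be a one-dimensional reduced Cohen-Macaulay local ring and M a finitely generated R-module. Then M has a rank (i.e., there exists an integer r with M_p \cong R_p^r for all associated primes p of R) if and only if [M] = 0 in the reduced rationalized Grothendieck group (G(R)/Z[R]) \otimes_Z Q. -/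
open CategoryTheory IsLocalRing

open scoped TensorProduct

noncomputable section

variable (R : Type) [CommRing R]

/-- Objects: finitely generated `R`-modules (in `Type 0`). -/
def FGMod : Type 1 := {M : ModuleCat.{0} R // Module.Finite R M}

/-- The subgroup of relations coming from short exact sequences. -/
def grothRels : AddSubgroup (FreeAbelianGroup (FGMod R)) :=
  AddSubgroup.closure {x | ∃ (A B C : FGMod R) (f : A.1 →ₗ[R] B.1) (g : B.1 →ₗ[R] C.1),
    Function.Injective f ∧ Function.Surjective g ∧ Function.Exact f g ∧
    x = FreeAbelianGroup.of B - FreeAbelianGroup.of A - FreeAbelianGroup.of C}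

/-- The Grothendieck group of finitely generated `R`-modules. -/
def GGroup : Type 1 := FreeAbelianGroup (FGMod R) ⧸ grothRels R

instance : AddCommGroup (GGroup R) :=
  inferInstanceAs (AddCommGroup (FreeAbelianGroup (FGMod R) ⧸ grothRels R))

/-- The class `[M]` of a finitely generated module in the Grothendieck group. -/
def gclass (M : Type) [AddCommGroup M] [Module R M] [hM : Module.Finite R M] :
    GGroup R :=
  QuotientAddGroup.mk (FreeAbelianGroup.of
    ⟨ModuleCat.of R M, by exact hM⟩)

/-- The reduced Grothendieck group `G(R)/ℤ·[R]`. -/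
def GBar : Type 1 := GGroup R ⧸ AddSubgroup.zmultiples (gclass R R)

instance : AddCommGroup (GBar R) :=
  inferInstanceAs (AddCommGroup (GGroup R ⧸ AddSubgroup.zmultiples (gclass R R)))

/-- The class of `M` in the reduced rationalized Grothendieck group
`(G(R)/ℤ[R]) ⊗_ℤ ℚ`. -/
def gbarQClass (M : Type) [AddCommGroup M] [Module R M] [Module.Finite R M] :
    ℚ ⊗[ℤ] GBar R :=
  (1 : ℚ) ⊗ₜ[ℤ] (QuotientAddGroup.mk (gclass R M) : GBar R)

end

/-!
The length `ℓ_p` of the localization at a minimal prime `p` is additive on short exact sequences,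
hence a homomorphism `G(R) → ℤ`. If `M` has class zero, then `n[M] = a[R]` for integers `n ≠ 0` and
`a`, so the vectors `(ℓ_p M)_p` and `(ℓ_p R)_p` are proportional. Conversely, a prime filtration
writes `[M]` as `∑_p ℓ_p(M) [R/p]`, summed over the minimal primes, plus a multiple of the class of
the residue field `k`. The latter is torsion: for a regular `x` in the maximal ideal, `R/xR` has
some finite length `n ≠ 0`, so `n[k] = [R/xR] = [R] - [R] = 0`. Hence proportionality of the two
vectors makes `[M]` a rational multiple of `[R]`. When `R` is reduced, each `R_p` is a field, so
`ℓ_p(R) = 1` and `ℓ_p(M)` is the rank of `M_p`; proportionality means that this rank does not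
depend on `p`.
-/

section LocalLength

variable {R : Type*} [CommRing R]

/-- The multiplicity of `N` at the prime `p`: the length of `N_p` over `R_p`, as a natural number.
It is `0` if that length is infinite. -/
noncomputable def localLength (p : Ideal R) [p.IsPrime] (N : Type*) [AddCommGroup N] [Module R N] :
    ℕ :=
  (Module.length (Localization p.primeCompl) (LocalizedModule p.primeCompl N)).toNat

instance isPrime_coe_minimalPrimes (p : minimalPrimes R) : (p : Ideal R).IsPrime :=
  p.2.1.1

theorem not_le_of_mem_minimalPrimes_of_ne {p q : Ideal R} [q.IsPrime] (hp : p ∈ minimalPrimes R)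
    (hne : q ≠ p) : ¬ q ≤ p :=
  fun hle => hne (le_antisymm hle (hp.2 ⟨inferInstance, bot_le⟩ hle))

theorem isField_localization_of_mem_minimalPrimes [IsReduced R] (p : minimalPrimes R) :
    IsField (Localization p.1.primeCompl) := by
  have := Ring.KrullDimLE.of_isLocalization p.1 p.2 (Localization p.1.primeCompl)
  have := Localization.AtPrime.isLocalRing p.1
  exact Ring.KrullDimLE.isField_of_isReduced

theorem localLength_congr {A B : Type*} [AddCommGroup A] [AddCommGroup B] [Module R A]
    [Module R B] (p : Ideal R) [p.IsPrime] (e : A ≃ₗ[R] B) : localLength p A = localLength p B :=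
  congrArg ENat.toNat (IsLocalizedModule.mapEquiv p.primeCompl
    (LocalizedModule.mkLinearMap p.primeCompl A) (LocalizedModule.mkLinearMap p.primeCompl B)
    (Localization p.primeCompl) e).length_eq

theorem localLength_eq_zero_of_forall_exists_smul_eq_zero {N : Type*} [AddCommGroup N] [Module R N]
    (p : Ideal R) [p.IsPrime] (h : ∀ a : N, ∃ r ∉ p, r • a = 0) : localLength p N = 0 := by
  have : Subsingleton (LocalizedModule p.primeCompl N) := LocalizedModule.subsingleton_iff.2 h
  simp [localLength]

theorem localLength_quotient_eq_zero_of_not_le (p q : Ideal R) [p.IsPrime] (h : ¬ q ≤ p) :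
    localLength p (R ⧸ q) = 0 := by
  obtain ⟨x, hxq, hxp⟩ := SetLike.not_le_iff_exists.1 h
  refine localLength_eq_zero_of_forall_exists_smul_eq_zero p fun a => ⟨x, hxp, ?_⟩
  obtain ⟨a, rfl⟩ := Ideal.Quotient.mk_surjective a
  exact Ideal.Quotient.eq_zero_iff_mem.2 (Ideal.mul_mem_right _ _ hxq)

theorem isSimpleModule_localizedModule_quotient (p : Ideal R) [p.IsPrime] :
    IsSimpleModule (Localization p.primeCompl) (LocalizedModule p.primeCompl (R ⧸ p)) := by
  refine isSimpleModule_iff_toSpanSingleton_surjective.2 ⟨?_, fun x hx y => ?_⟩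
  · rw [← not_subsingleton_iff_nontrivial, LocalizedModule.subsingleton_iff]
    intro h
    obtain ⟨r, hrp, hr⟩ := h 1
    exact hrp (Ideal.Quotient.eq_zero_iff_mem.1 (by simpa [Algebra.smul_def] using hr))
  · induction x using LocalizedModule.induction_on with | _ a s
    induction y using LocalizedModule.induction_on with | _ b t
    obtain ⟨a, rfl⟩ := Ideal.Quotient.mk_surjective a
    obtain ⟨b, rfl⟩ := Ideal.Quotient.mk_surjective b
    have ha : a ∉ p := fun ha => hx <| by
      rw [Ideal.Quotient.eq_zero_iff_mem.2 ha, LocalizedModule.zero_mk]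
    refine ⟨Localization.mk (b * s) (⟨a, ha⟩ * t), ?_⟩
    rw [LinearMap.toSpanSingleton_apply, LocalizedModule.mk_smul_mk, LocalizedModule.mk_eq]
    refine ⟨1, ?_⟩
    simp only [one_smul, Submonoid.smul_def, Submonoid.coe_mul, Algebra.smul_def,
      Ideal.Quotient.algebraMap_eq, map_mul]
    ring

theorem localLength_quotient_self (p : Ideal R) [p.IsPrime] : localLength p (R ⧸ p) = 1 := by
  have := isSimpleModule_localizedModule_quotient p
  simp [localLength]

theorem localLength_self (p : Ideal R) [p.IsPrime] :
    localLength p R =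
      (Module.length (Localization p.primeCompl) (Localization p.primeCompl)).toNat :=
  congrArg ENat.toNat <| LinearEquiv.length_eq <|
    LinearEquiv.extendScalarsOfIsLocalization p.primeCompl (Localization p.primeCompl) <|
      IsLocalizedModule.iso p.primeCompl (Algebra.linearMap R (Localization p.primeCompl))

theorem localLength_self_of_isReduced [IsReduced R] (p : minimalPrimes R) :
    localLength p.1 R = 1 := by
  let := (isField_localization_of_mem_minimalPrimes p).toField
  rw [localLength_self, Module.length_eq_one, ENat.toNat_one]

theorem nonempty_localizedModule_equiv_pi_iff [IsReduced R] (p : minimalPrimes R) {N : Type*}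
    [AddCommGroup N] [Module R N] [Module.Finite R N] {r : ℕ} :
    Nonempty (LocalizedModule p.1.primeCompl N ≃ₗ[Localization p.1.primeCompl]
      (Fin r → Localization p.1.primeCompl)) ↔ localLength p.1 N = r := by
  let := (isField_localization_of_mem_minimalPrimes p).toField
  rw [localLength, Module.length_eq_finrank, ENat.toNat_natCast]
  exact ⟨fun ⟨e⟩ => e.finrank_eq.trans (Module.finrank_fin_fun _),
    fun h => ⟨.ofFinrankEq _ _ (h.trans (Module.finrank_fin_fun _).symm)⟩⟩

variable [IsNoetherianRing R]

theorem isArtinianRing_localization_of_mem_minimalPrimes (p : minimalPrimes R) :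
    IsArtinianRing (Localization p.1.primeCompl) := by
  have := Ring.KrullDimLE.of_isLocalization p.1 p.2 (Localization p.1.primeCompl)
  exact isArtinianRing_iff_krullDimLE_zero.2 this

theorem natCast_localLength (p : minimalPrimes R) (N : Type*) [AddCommGroup N] [Module R N]
    [Module.Finite R N] :
    (localLength p.1 N : ℕ∞) =
      Module.length (Localization p.1.primeCompl) (LocalizedModule p.1.primeCompl N) := by
  have := isArtinianRing_localization_of_mem_minimalPrimes p
  exact ENat.natCast_toNat Module.length_ne_top

theorem localLength_eq_add_of_exact {A B C : Type*} [AddCommGroup A] [AddCommGroup B]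
    [AddCommGroup C] [Module R A] [Module R B] [Module R C] [Module.Finite R B]
    (p : minimalPrimes R) (f : A →ₗ[R] B) (g : B →ₗ[R] C) (hf : Function.Injective f)
    (hg : Function.Surjective g) (hfg : Function.Exact f g) :
    localLength p.1 B = localLength p.1 A + localLength p.1 C := by
  have : Module.Finite R A := .of_injective f hf
  have : Module.Finite R C := .of_surjective g hg
  rw [← Nat.cast_inj (R := ℕ∞), Nat.cast_add]
  simp only [natCast_localLength]
  exact Module.length_eq_add_of_exact (LocalizedModule.map p.1.primeCompl f)
    (LocalizedModule.map p.1.primeCompl g) (LocalizedModule.map_injective _ f hf)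
    (LocalizedModule.map_surjective _ g hg) (LocalizedModule.map_exact _ f g hfg)

theorem localLength_self_ne_zero (p : minimalPrimes R) : localLength p.1 R ≠ 0 := by
  rw [← Nat.cast_ne_zero (R := ℕ∞), natCast_localLength, ← pos_iff_ne_zero, Module.length_pos_iff]
  infer_instance

theorem associatedPrimes_self_eq_minimalPrimes [IsReduced R] :
    associatedPrimes R R = minimalPrimes R := by
  refine Set.Subset.antisymm (fun p hp => ?_) ?_
  · have := hp.1
    obtain ⟨a, rfl⟩ := (isAssociatedPrime_iff.1 hp).2
    refine ⟨⟨this, bot_le⟩, fun q ⟨hq, _⟩ hle y hy => ?_⟩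
    have haq : a ∉ q := fun haq => this.ne_top <| by
      have haa : a * a = 0 := by simpa [Submodule.mem_colon_singleton] using hle haq
      simp [IsReduced.eq_zero a ⟨2, (sq a).trans haa⟩]
    have hya : y * a = 0 := by simpa [Submodule.mem_colon_singleton] using hy
    exact (hq.mem_or_mem (hya ▸ q.zero_mem)).resolve_right haq
  · have h := Module.associatedPrimes.minimalPrimes_annihilator_subset_associatedPrimes R R
    rwa [Module.annihilator_eq_bot.2 inferInstance] at h

end LocalLength

section GrothendieckGroup

variable {R : Type} [CommRing R]

theorem gclass_eq_add_of_exact {A B C : Type} [AddCommGroup A] [AddCommGroup B] [AddCommGroup C]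
    [Module R A] [Module R B] [Module R C]
    [Module.Finite R A] [Module.Finite R B] [Module.Finite R C]
    (f : A →ₗ[R] B) (g : B →ₗ[R] C) (hf : Function.Injective f) (hg : Function.Surjective g)
    (hfg : Function.Exact f g) :
    gclass R B = gclass R A + gclass R C := by
  rw [← sub_eq_zero, ← sub_sub]
  exact (QuotientAddGroup.eq_zero_iff _).2 <|
    AddSubgroup.subset_closure ⟨_, _, _, f, g, hf, hg, hfg, rfl⟩

theorem gclass_eq_zero_of_subsingleton {A : Type} [AddCommGroup A] [Module R A]
    [Module.Finite R A] [Subsingleton A] : gclass R A = 0 := by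
  simpa using gclass_eq_add_of_exact (R := R) (0 : A →ₗ[R] A) (0 : A →ₗ[R] A)
    (Function.injective_of_subsingleton _) (Function.surjective_to_subsingleton _)
    fun _ => ⟨fun _ => ⟨0, Subsingleton.elim _ _⟩, fun _ => Subsingleton.elim _ _⟩

theorem gclass_congr {A B : Type} [AddCommGroup A] [AddCommGroup B] [Module R A] [Module R B]
    [Module.Finite R A] [Module.Finite R B] (e : A ≃ₗ[R] B) : gclass R A = gclass R B := by
  rw [gclass_eq_add_of_exact e.toLinearMap (0 : B →ₗ[R] PUnit.{1}) e.injective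
    (Function.surjective_to_subsingleton _) ((e.exact_zero_iff_surjective _).2 e.surjective),
    gclass_eq_zero_of_subsingleton (A := PUnit.{1}), add_zero]

theorem gclass_quotient_span_singleton {x : R} (hx : x ∈ nonZeroDivisors R) :
    gclass R (R ⧸ Ideal.span {x}) = 0 := by
  have hexact : Function.Exact (LinearMap.mulLeft R x) (Ideal.span {x}).mkQ := by
    rw [LinearMap.exact_iff, Submodule.ker_mkQ]
    ext y
    simp [Ideal.mem_span_singleton, Dvd.dvd, eq_comm]
  simpa using gclass_eq_add_of_exact (LinearMap.mulLeft R x) (Ideal.span {x}).mkQ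
    (fun _ _ => (mul_cancel_left_mem_nonZeroDivisors hx).1) (Submodule.mkQ_surjective _) hexact

theorem gclass_eq_length_smul [IsLocalRing R] {N : Type} [AddCommGroup N] [Module R N]
    [hfin : Module.Finite R N] (hN : IsFiniteLength R N) :
    gclass R N = (Module.length R N).toNat • gclass R (R ⧸ maximalIdeal R) := by
  induction hN generalizing hfin with
  | of_subsingleton => simp [gclass_eq_zero_of_subsingleton]
  | @of_simple_quotient N _ _ A _ hA ih =>
    have := (isFiniteLength_iff_isNoetherian_isArtinian.1 hA).1
    obtain ⟨m, hm, ⟨e⟩⟩ := isSimpleModule_iff_quot_maximal.1 ‹IsSimpleModule R (N ⧸ A)›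
    obtain rfl := eq_maximalIdeal hm
    have hlength := Module.length_eq_add_of_exact A.subtype A.mkQ A.injective_subtype
      A.mkQ_surjective (LinearMap.exact_subtype_mkQ A)
    rw [gclass_eq_add_of_exact A.subtype A.mkQ A.injective_subtype A.mkQ_surjective
      (LinearMap.exact_subtype_mkQ A), ih, gclass_congr e, hlength, Module.length_eq_one R (N ⧸ A),
      ENat.toNat_add (Module.length_ne_top_iff.2 hA) ENat.one_ne_top, ENat.toNat_one, succ_nsmul]

/-- The multiplicity at a minimal prime as a homomorphism on the Grothendieck group. -/
noncomputable def localLengthHom [IsNoetherianRing R] (p : minimalPrimes R) : GGroup R →+ ℤ :=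
  QuotientAddGroup.lift (grothRels R)
    (FreeAbelianGroup.lift fun A : FGMod R => (localLength p.1 A.1 : ℤ)) <| by
      rw [grothRels, AddSubgroup.closure_le]
      rintro _ ⟨A, B, C, f, g, hf, hg, hfg, rfl⟩
      have := B.2
      simp [localLength_eq_add_of_exact p f g hf hg hfg]

theorem localLengthHom_gclass [IsNoetherianRing R] (p : minimalPrimes R) (N : Type)
    [AddCommGroup N] [Module R N] [Module.Finite R N] :
    localLengthHom p (gclass R N) = localLength p.1 N :=
  FreeAbelianGroup.lift_apply_of _ _

theorem map_gclass_eq_finsum [IsNoetherianRing R] {G : Type*} [AddCommGroup G] (φ : GGroup R →+ G)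
    (hφ : ∀ q : Ideal R, q.IsPrime → q ∉ minimalPrimes R → φ (gclass R (R ⧸ q)) = 0)
    (N : Type) [AddCommGroup N] [Module R N] [hN : Module.Finite R N] :
    φ (gclass R N) = ∑ᶠ p : minimalPrimes R, localLength p.1 N • φ (gclass R (R ⧸ p.1)) := by
  have := (minimalPrimes.finite_of_isNoetherianRing R).to_subtype
  induction hN using IsNoetherianRing.induction_on_isQuotientEquivQuotientPrime with
  | subsingleton N =>
    have hN (p : minimalPrimes R) : localLength p.1 N = 0 := by simp [localLength]
    simp [gclass_eq_zero_of_subsingleton, hN]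
  | quotient N q e =>
    simp only [gclass_congr e, localLength_congr _ e]
    by_cases hq : q.1 ∈ minimalPrimes R
    · rw [finsum_eq_single _ ⟨q.1, hq⟩, localLength_quotient_self, one_smul]
      intro p hne
      rw [localLength_quotient_eq_zero_of_not_le, zero_smul]
      exact not_le_of_mem_minimalPrimes_of_ne p.2 fun h => hne (Subtype.ext h.symm)
    · rw [hφ q.1 q.2 hq, finsum_eq_zero_of_forall_eq_zero]
      intro p
      rw [localLength_quotient_eq_zero_of_not_le, zero_smul]
      exact not_le_of_mem_minimalPrimes_of_ne p.2 fun h => hq (h ▸ p.2)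
  | exact A B C f g hf hg hfg hA hC =>
    rw [gclass_eq_add_of_exact f g hf hg hfg, map_add, hA, hC,
      ← finsum_add_distrib (Set.toFinite _) (Set.toFinite _)]
    exact finsum_congr fun p => by rw [localLength_eq_add_of_exact p f g hf hg hfg, add_smul]

theorem gbarQClass_eq_zero_iff {M : Type} [AddCommGroup M] [Module R M] [Module.Finite R M] :
    gbarQClass R M = 0 ↔ ∃ n : ℤ, n ≠ 0 ∧ ∃ k : ℤ, n • gclass R M = k • gclass R R := by
  have hsmul (n : ℤ) : n • (QuotientAddGroup.mk (gclass R M) : GBar R) = 0 ↔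
      ∃ k : ℤ, n • gclass R M = k • gclass R R := by
    rw [← QuotientAddGroup.mk_zsmul, QuotientAddGroup.eq_zero_iff, AddSubgroup.mem_zmultiples_iff]
    simp only [eq_comm]
  refine (IsLocalizedModule.eq_zero_iff (nonZeroDivisors ℤ)
    (TensorProduct.mk ℤ ℚ (GBar R) 1)).trans ?_
  exact ⟨fun ⟨n, hn⟩ => ⟨n, nonZeroDivisors.coe_ne_zero n, (hsmul n).1 hn⟩,
    fun ⟨n, hn, hk⟩ => ⟨⟨n, mem_nonZeroDivisors_of_ne_zero hn⟩, (hsmul n).2 hk⟩⟩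

theorem gbarQClass_residueField [IsNoetherianRing R] [IsLocalRing R] [Ring.KrullDimLE 1 R] {x : R}
    (hxm : x ∈ maximalIdeal R) (hx : x ∈ nonZeroDivisors R) :
    gbarQClass R (R ⧸ maximalIdeal R) = 0 := by
  have hfin := isFiniteLength_quotient_span_singleton R hx
  have hlength : (Module.length R (R ⧸ Ideal.span {x})).toNat ≠ 0 := by
    simpa [ENat.toNat_eq_zero, Module.length_ne_top_iff.2 hfin, Module.length_eq_zero_iff] using
      (mem_maximalIdeal x).1 hxm
  refine gbarQClass_eq_zero_iff.2 ⟨_, Nat.cast_ne_zero.2 hlength, 0, ?_⟩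
  rw [natCast_zsmul, ← gclass_eq_length_smul hfin, gclass_quotient_span_singleton hx, zero_smul]

/-- The homomorphism from the Grothendieck group carrying each class `[M]` to its image in
`(G(R)/ℤ[R]) ⊗_ℤ ℚ`. -/
noncomputable def gbarQHom (R : Type) [CommRing R] : GGroup R →+ ℚ ⊗[ℤ] GBar R :=
  (TensorProduct.mk ℤ ℚ (GBar R) 1).toAddMonoidHom.comp
    (QuotientAddGroup.mk' (AddSubgroup.zmultiples (gclass R R)))

theorem gbarQHom_gclass (M : Type) [AddCommGroup M] [Module R M] [Module.Finite R M] :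
    gbarQHom R (gclass R M) = gbarQClass R M :=
  rfl

theorem gbarQClass_eq_finsum [IsNoetherianRing R] [IsLocalRing R] [Ring.KrullDimLE 1 R] {x : R}
    (hxm : x ∈ maximalIdeal R) (hx : x ∈ nonZeroDivisors R)
    (N : Type) [AddCommGroup N] [Module R N] [Module.Finite R N] :
    gbarQClass R N = ∑ᶠ p : minimalPrimes R, localLength p.1 N • gbarQClass R (R ⧸ p.1) := by
  simp only [← gbarQHom_gclass]
  refine map_gclass_eq_finsum (gbarQHom R) (fun q hq hqmin => ?_) N
  obtain rfl : q = maximalIdeal R :=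
    eq_maximalIdeal ((Ring.krullDimLE_one_iff.1 inferInstance q hq).resolve_left hqmin)
  rw [gbarQHom_gclass, gbarQClass_residueField hxm hx]

theorem gbarQClass_self : gbarQClass R R = 0 :=
  gbarQClass_eq_zero_iff.2 ⟨1, one_ne_zero, 1, rfl⟩

theorem localLength_mul_eq_of_gbarQClass_eq_zero [IsNoetherianRing R] {M : Type} [AddCommGroup M]
    [Module R M] [Module.Finite R M] (hM : gbarQClass R M = 0) (p q : minimalPrimes R) :
    localLength p.1 M * localLength q.1 R = localLength q.1 M * localLength p.1 R := by
  obtain ⟨n, hn, k, hk⟩ := gbarQClass_eq_zero_iff.1 hM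
  have hlength (p : minimalPrimes R) : n * localLength p.1 M = k * localLength p.1 R := by
    simpa [localLengthHom_gclass] using congrArg (localLengthHom p) hk
  zify
  refine mul_left_cancel₀ hn ?_
  rw [← mul_assoc, ← mul_assoc, hlength, hlength, mul_right_comm]

theorem gbarQClass_eq_zero_iff_localLength_mul_eq [IsNoetherianRing R] [IsLocalRing R]
    [Ring.KrullDimLE 1 R] {x : R} (hxm : x ∈ maximalIdeal R) (hx : x ∈ nonZeroDivisors R)
    {M : Type} [AddCommGroup M] [Module R M] [Module.Finite R M] :
    gbarQClass R M = 0 ↔ ∀ p q : minimalPrimes R,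
      localLength p.1 M * localLength q.1 R = localLength q.1 M * localLength p.1 R := by
  refine ⟨localLength_mul_eq_of_gbarQClass_eq_zero, fun h => ?_⟩
  have := (minimalPrimes.finite_of_isNoetherianRing R).to_subtype
  obtain ⟨q⟩ : Nonempty (minimalPrimes R) := Ideal.nonempty_minimalPrimes bot_ne_top
  have hsmul : localLength q.1 R • gbarQClass R M = 0 := by
    rw [← smul_zero (localLength q.1 M), ← gbarQClass_self, gbarQClass_eq_finsum hxm hx M,
      gbarQClass_eq_finsum hxm hx R, smul_finsum' _ (Set.toFinite _),
      smul_finsum' _ (Set.toFinite _)]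
    refine finsum_congr fun p => ?_
    rw [smul_smul, smul_smul, mul_comm, h p q]
  rw [← Nat.cast_smul_eq_nsmul ℚ] at hsmul
  exact (smul_eq_zero.1 hsmul).resolve_left (Nat.cast_ne_zero.2 (localLength_self_ne_zero q))

end GrothendieckGroup

/-- over a one-dimensional reduced Cohen-Macaulay local ring, a finitely
generated module has a rank iff its class in the reduced rationalized Grothendieck
group vanishes. -/
theorem stmt_12 (R : Type) [CommRing R] [IsNoetherianRing R] [IsLocalRing R]
    [IsReduced R] (hdim : ringKrullDim R = 1)
    -- Cohen-Macaulayness: the maximal ideal contains a non zero-divisor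
    (hCM : ∃ x ∈ maximalIdeal R, x ∈ nonZeroDivisors R)
    (M : Type) [AddCommGroup M] [Module R M] [Module.Finite R M] :
    (∃ r : ℕ, ∀ (p : Ideal R) (hp : p ∈ associatedPrimes R R),
      haveI : p.IsPrime := hp.1
      Nonempty ((LocalizedModule p.primeCompl M) ≃ₗ[Localization p.primeCompl]
        (Fin r → Localization p.primeCompl))) ↔
    gbarQClass R M = 0 := by
  have : Ring.KrullDimLE 1 R := Ring.krullDimLE_iff.2 hdim.le
  obtain ⟨x, hxm, hx⟩ := hCM
  simp only [gbarQClass_eq_zero_iff_localLength_mul_eq hxm hx, localLength_self_of_isReduced,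
    mul_one]
  constructor
  · rintro ⟨r, hr⟩
    have hlength (p : minimalPrimes R) : localLength p.1 M = r :=
      (nonempty_localizedModule_equiv_pi_iff p).1
        (hr p.1 (associatedPrimes_self_eq_minimalPrimes.ge p.2))
    exact fun p q => (hlength p).trans (hlength q).symm
  · intro h
    obtain ⟨q⟩ : Nonempty (minimalPrimes R) := Ideal.nonempty_minimalPrimes bot_ne_top
    exact ⟨localLength q.1 M, fun p hp => (nonempty_localizedModule_equiv_pi_iff
      ⟨p, associatedPrimes_self_eq_minimalPrimes.le hp⟩).2 (h _ _)⟩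
end
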